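/- Let A be a C*-algebra and let F be a JB*-subtriple of A which is a Chebyshev subspace of A. If no element of F is Brown–Pedersen quasi-invertible in F, then F is an inner ideal of A; that is, a x* b + b x* a ∈ F for all a, b ∈ F and all x ∈ A. -/

import Mathlib

section Helpers

variable {A : Type*} [NonUnitalCStarAlgebra A]

lemma cheb_pow_bound (n : ℕ) : ∀ d k : A, IsSelfAdjoint d → IsSelfAdjoint k → d * k = 0 →
    ‖d + k‖ ^ (2 ^ n) ≤ ‖d‖ ^ (2 ^ n) + ‖k‖ ^ (2 ^ n) := by
  induction n with
  | zero => intro d k _ _ _; simpa using norm_add_le d k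
  | succ n ih =>
    intro d k hd hk h
    have h' : k * d = 0 := by
      have := congrArg star h
      simpa [hd.star_eq, hk.star_eq] using this
    have hdd : IsSelfAdjoint (d * d) := by
      simpa [hd.star_eq] using IsSelfAdjoint.star_mul_self d
    have hkk : IsSelfAdjoint (k * k) := by
      simpa [hk.star_eq] using IsSelfAdjoint.star_mul_self k
    have key := ih (d * d) (k * k) hdd hkk (by
      rw [mul_assoc, ← mul_assoc d k k, h]; simp)
    have sq : ∀ s : A, IsSelfAdjoint s → ‖s * s‖ = ‖s‖ ^ 2 := by
      intro s hs
      have := CStarRing.norm_star_mul_self (x := s)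
      rw [hs.star_eq] at this
      rw [this, sq]
    have e : d * d + k * k = (d + k) * (d + k) := by
      rw [add_mul, mul_add, mul_add, h, h']; simp
    rw [e, sq _ (hd.add hk), sq _ hd, sq _ hk, ← pow_mul, ← pow_mul, ← pow_mul] at key
    rw [pow_succ' 2 n]
    exact key

lemma cheb_norm_add_le (d k : A) (hd : IsSelfAdjoint d) (hk : IsSelfAdjoint k) (h : d * k = 0)
    (M : ℝ) (hM : 0 < M) (hdM : ‖d‖ ≤ M) (hkM : ‖k‖ ≤ M) : ‖d + k‖ ≤ M := by
  by_contra! hlt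
  have h1 : 1 < ‖d + k‖ / M := by rwa [one_lt_div hM]
  obtain ⟨n, hn⟩ := pow_unbounded_of_one_lt 2 h1
  have h2 : (‖d + k‖ / M) ^ n ≤ (‖d + k‖ / M) ^ (2 ^ n) :=
    pow_le_pow_right₀ h1.le Nat.lt_two_pow_self.le
  have h3 := cheb_pow_bound n d k hd hk h
  have h4 : ‖d‖ ^ (2 ^ n) ≤ M ^ (2 ^ n) := by gcongr
  have h5 : ‖k‖ ^ (2 ^ n) ≤ M ^ (2 ^ n) := by gcongr
  have h6 : 0 < M ^ (2 ^ n) := by positivity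
  have h7 : (‖d + k‖ / M) ^ (2 ^ n) ≤ 2 := by
    rw [div_pow, div_le_iff₀ h6]; linarith
  linarith

lemma cheb_orth (y c : A) (h1 : star y * c = 0) (h2 : c * star y = 0) (hy : y ≠ 0)
    (hc : ‖c‖ ≤ ‖y‖) : ‖y - c‖ ≤ ‖y‖ := by
  have h3 : star c * y = 0 := by simpa using congrArg star h1
  have h4 : y * star c = 0 := by simpa using congrArg star h2
  have hpos : 0 < ‖y‖ := norm_pos_iff.mpr hy
  have e : star (y - c) * (y - c) = star y * y + star c * c := by
    rw [star_sub, sub_mul, mul_sub, mul_sub, h1, h3]; simp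
  have := cheb_norm_add_le (star y * y) (star c * c) (.star_mul_self y) (.star_mul_self c)
    (by rw [mul_assoc, ← mul_assoc y, h4]; simp) (‖y‖ * ‖y‖) (by positivity)
    (by rw [CStarRing.norm_star_mul_self])
    (by rw [CStarRing.norm_star_mul_self]; gcongr)
  rw [← e, CStarRing.norm_star_mul_self] at this
  nlinarith [norm_nonneg (y - c)]

variable (F : Submodule ℂ A)

lemma cheb_triple' (hFtriple : ∀ x ∈ F, ∀ y ∈ F, ∀ z ∈ F,
      (2 : ℂ)⁻¹ • (x * star y * z + z * star y * x) ∈ F) {x y z : A}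
    (hx : x ∈ F) (hy : y ∈ F) (hz : z ∈ F) : x * star y * z + z * star y * x ∈ F := by
  have := F.smul_mem 2 (hFtriple x hx y hy z hz)
  rwa [smul_smul, mul_inv_cancel₀ two_ne_zero, one_smul] at this

lemma cheb_Q (hFtriple : ∀ x ∈ F, ∀ y ∈ F, ∀ z ∈ F,
      (2 : ℂ)⁻¹ • (x * star y * z + z * star y * x) ∈ F) {x y : A}
    (hx : x ∈ F) (hy : y ∈ F) : x * star y * x ∈ F := by
  have := hFtriple x hx y hy x hx
  rwa [← two_smul ℂ, smul_smul, inv_mul_cancel₀ two_ne_zero, one_smul] at this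

lemma cheb_mem
    (hFtriple : ∀ x ∈ F, ∀ y ∈ F, ∀ z ∈ F,
      (2 : ℂ)⁻¹ • (x * star y * z + z * star y * x) ∈ F)
    (hCheb : ∀ x : A, ∃! v : A, v ∈ F ∧ ‖x - v‖ = Metric.infDist x (F : Set A))
    (hBP : ∀ u ∈ F, ¬ ∃ y ∈ F, ∀ z ∈ F,
      z - u * star y * z - z * star y * u + u * star y * z * star y * u = 0)
    (e f x : A) (he : e ∈ F) (hf : f ∈ F) (hl : e * star e * f = f) (hr : f * star e * e = f)
    (hfn : ‖f‖ ≤ 1) (hxl : f * star f * x = x) (hxr : x * star f * f = x) : x ∈ F := by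
  obtain ⟨v, ⟨hv, hvd⟩, huniq⟩ := hCheb x
  have dist_le : ∀ w ∈ F, Metric.infDist x (F : Set A) ≤ ‖x - w‖ := by
    intro w hw
    rw [← dist_eq_norm]
    exact Metric.infDist_le_dist_of_mem hw
  have hfn' : ‖star f‖ ≤ 1 := by rwa [norm_star]
  -- the best approximation is invariant
  have hw : f * star (f * star v * f) * f ∈ F := cheb_Q F hFtriple hf (cheb_Q F hFtriple hf hv)
  have hw' : f * star (f * star v * f) * f = f * star f * v * star f * f := by
    simp [mul_assoc]
  rw [hw'] at hw
  have hxw : x - f * star f * v * star f * f = f * (star f * (x - v) * star f) * f := by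
    have : f * star f * x * star f * f = x := by rw [hxl, hxr]
    simp only [mul_sub, sub_mul]
    simp only [mul_assoc] at this ⊢
    rw [this]
  have contr : ∀ s t : A, ‖s‖ ≤ 1 → ‖s * t * s‖ ≤ ‖t‖ := by
    intro s t hs
    calc ‖s * t * s‖ ≤ ‖s‖ * ‖t‖ * ‖s‖ :=
          (norm_mul_le _ _).trans (by gcongr; exact norm_mul_le _ _)
      _ ≤ 1 * ‖t‖ * 1 := by gcongr
      _ = ‖t‖ := by ring
  have hwv : f * star f * v * star f * f = v := by
    apply huniq
    refine ⟨hw, le_antisymm ?_ (dist_le _ hw)⟩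
    rw [← hvd, hxw]
    exact (contr _ _ hfn).trans (contr _ _ hfn')
  by_contra hxF
  set y := x - v with hy
  have hy0 : y ≠ 0 := by
    intro h0
    exact hxF (by rw [sub_eq_zero.mp h0]; exact hv)
  have hyf : y = f * star f * y * star f * f := by
    rw [hwv] at hxw
    simpa [mul_assoc] using hxw
  -- an element orthogonal to y
  have := hBP e he
  push Not at this
  obtain ⟨z, hz, hc⟩ := this e he
  set c := z - e * star e * z - z * star e * e + e * star e * z * star e * e with hcdef
  have hcF : c ∈ F := by
    have h1 := cheb_triple' F hFtriple he he hz
    have h2 := cheb_Q F hFtriple he (cheb_Q F hFtriple he hz)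
    have : c = z - (e * star e * z + z * star e * e) + e * star (e * star z * e) * e := by
      simp only [hcdef, star_mul, star_star, mul_assoc]; abel
    rw [this]
    exact F.add_mem (F.sub_mem hz h1) h2
  have hl' : ∀ t, star f * (e * (star e * t)) = star f * t := by
    intro t
    have := congrArg (fun s => star s * t) hl
    simpa [mul_assoc] using this
  have hr' : ∀ t, t * (star e * (e * star f)) = t * star f := by
    intro t
    have := congrArg (fun s => t * star s) hr
    simpa [mul_assoc] using this
  have hr'' : star e * (e * star f) = star f := by
    have := congrArg star hr
    simpa [mul_assoc] using this
  have hfc : star f * c = 0 := by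
    simp only [hcdef, mul_add, mul_sub, mul_assoc, hl']; abel
  have hcf : c * star f = 0 := by
    simp only [hcdef, add_mul, sub_mul, mul_assoc, hr'']; abel
  have h1 : star y * c = 0 := by
    rw [hyf]; simp [mul_assoc, hfc]
  have h2 : c * star y = 0 := by
    rw [hyf]; simp only [star_mul, star_star, ← mul_assoc, hcf]; simp
  have hcpos : 0 < ‖c‖ := norm_pos_iff.mpr hc
  have hypos : 0 < ‖y‖ := norm_pos_iff.mpr hy0
  set r : ℂ := ((‖y‖ / ‖c‖ : ℝ) : ℂ) with hrr
  have hr0 : r ≠ 0 := by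
    rw [hrr]; exact_mod_cast (div_pos hypos hcpos).ne'
  have hrc : r • c ∈ F := F.smul_mem _ hcF
  have hle : ‖y - r • c‖ ≤ ‖y‖ := by
    apply cheb_orth _ _ _ _ hy0
    · rw [norm_smul, hrr, Complex.norm_real, Real.norm_of_nonneg (by positivity),
        div_mul_cancel₀ _ hcpos.ne']
    · rw [mul_smul_comm, h1, smul_zero]
    · rw [smul_mul_assoc, h2, smul_zero]
  have hvc : v + r • c ∈ F := F.add_mem hv hrc
  have := huniq (v + r • c) ⟨hvc, le_antisymm (by
    rw [← hvd, ← sub_sub]; exact hle) (dist_le _ hvc)⟩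
  have h0 : r • c = 0 := by simpa using this
  exact (smul_ne_zero hr0 hc) h0

/-- Odd functional calculus elements stay in the subtriple. -/
lemma cheb_cfc_mem (hFclosed : IsClosed (F : Set A))
    (hFtriple : ∀ x ∈ F, ∀ y ∈ F, ∀ z ∈ F,
      (2 : ℂ)⁻¹ • (x * star y * z + z * star y * x) ∈ F)
    (a : A) (ha : a ∈ F) (g : ℝ → ℝ) : a * cfcₙ g (star a * a) ∈ F := by
  set b := star a * a with hb
  have hbs : star b = b := by simp [hb]
  let S : NonUnitalStarSubalgebra ℂ A :=
    { carrier := {s | (s * b = b * s ∧ star s * b = b * star s) ∧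
        (a * s ∈ F ∧ a * star s ∈ F) ∧
        ∀ w, w * b = b * w → a * w ∈ F → a * (w * s) ∈ F ∧ a * (w * star s) ∈ F}
      add_mem' := by
        rintro s t ⟨⟨s1, s2⟩, ⟨s3, s4⟩, s5⟩ ⟨⟨t1, t2⟩, ⟨t3, t4⟩, t5⟩
        refine ⟨⟨by rw [add_mul, mul_add, s1, t1], by rw [star_add, add_mul, mul_add, s2, t2]⟩,
          ⟨by rw [mul_add]; exact F.add_mem s3 t3,
           by rw [star_add, mul_add]; exact F.add_mem s4 t4⟩, ?_⟩
        intro w hw hwF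
        rw [star_add, mul_add, mul_add, mul_add, mul_add]
        exact ⟨F.add_mem (s5 w hw hwF).1 (t5 w hw hwF).1,
          F.add_mem (s5 w hw hwF).2 (t5 w hw hwF).2⟩
      zero_mem' := by simp
      mul_mem' := by
        rintro s t ⟨⟨s1, s2⟩, ⟨s3, s4⟩, s5⟩ ⟨⟨t1, t2⟩, ⟨t3, t4⟩, t5⟩
        have comm : ∀ p q : A, p * b = b * p → q * b = b * q → p * q * b = b * (p * q) := by
          intro p q hp hq
          rw [mul_assoc, hq, ← mul_assoc, hp, mul_assoc]
        refine ⟨⟨comm _ _ s1 t1, by rw [star_mul]; exact comm _ _ t2 s2⟩,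
          ⟨(t5 s s1 s3).1, by rw [star_mul]; exact (s5 _ t2 t4).2⟩, ?_⟩
        intro w hw hwF
        rw [star_mul, ← mul_assoc w, ← mul_assoc w]
        exact ⟨(t5 _ (comm _ _ hw s1) (s5 w hw hwF).1).1,
          (s5 _ (comm _ _ hw t2) (t5 w hw hwF).2).2⟩
      smul_mem' := by
        rintro r s ⟨⟨s1, s2⟩, ⟨s3, s4⟩, s5⟩
        refine ⟨⟨by rw [smul_mul_assoc, mul_smul_comm, s1],
          by rw [star_smul, smul_mul_assoc, mul_smul_comm, s2]⟩,
          ⟨by rw [mul_smul_comm]; exact F.smul_mem _ s3,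
           by rw [star_smul, mul_smul_comm]; exact F.smul_mem _ s4⟩, ?_⟩
        intro w hw hwF
        rw [star_smul, mul_smul_comm, mul_smul_comm, mul_smul_comm, mul_smul_comm]
        exact ⟨F.smul_mem _ (s5 w hw hwF).1, F.smul_mem _ (s5 w hw hwF).2⟩
      star_mem' := by
        rintro s ⟨⟨s1, s2⟩, ⟨s3, s4⟩, s5⟩
        refine ⟨⟨s2, by rwa [star_star]⟩, ⟨s4, by rwa [star_star]⟩, ?_⟩
        intro w hw hwF
        rw [star_star]
        exact (s5 w hw hwF).symm }
  have hS : IsClosed (S : Set A) := by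
    change IsClosed {s | (s * b = b * s ∧ star s * b = b * star s) ∧
        (a * s ∈ F ∧ a * star s ∈ F) ∧
        ∀ w, w * b = b * w → a * w ∈ F → a * (w * s) ∈ F ∧ a * (w * star s) ∈ F}
    simp only [imp_and, forall_and]
    refine (((isClosed_eq ?_ ?_).inter (isClosed_eq ?_ ?_))).inter
      (IsClosed.inter (IsClosed.inter ?_ ?_) (IsClosed.inter ?_ ?_))
    · fun_prop
    · fun_prop
    · fun_prop
    · fun_prop
    · exact hFclosed.preimage (f := fun s => a * s) (by fun_prop)
    · exact hFclosed.preimage (f := fun s => a * star s) (by fun_prop)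
    · have h : IsClosed (⋂ w, ⋂ (_ : w * b = b * w), ⋂ (_ : a * w ∈ F),
          {s | a * (w * s) ∈ F}) := by
        refine isClosed_iInter fun w => isClosed_iInter fun _ => isClosed_iInter fun _ => ?_
        exact hFclosed.preimage (f := fun s => a * (w * s)) (by fun_prop)
      simp only [← Set.ofPred_forall] at h
      exact h
    · have h : IsClosed (⋂ w, ⋂ (_ : w * b = b * w), ⋂ (_ : a * w ∈ F),
          {s | a * (w * star s) ∈ F}) := by
        refine isClosed_iInter fun w => isClosed_iInter fun _ => isClosed_iInter fun _ => ?_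
        exact hFclosed.preimage (f := fun s => a * (w * star s)) (by fun_prop)
      simp only [← Set.ofPred_forall] at h
      exact h
  have hbS : b ∈ S := by
    have h1 : a * b ∈ F := by
      have := cheb_Q F hFtriple ha ha
      rwa [mul_assoc] at this
    have h2 : ∀ w, w * b = b * w → a * w ∈ F → a * (w * b) ∈ F := by
      intro w hw hwF
      have := hFtriple _ hwF _ ha _ ha
      have e : a * w * star a * a + a * star a * (a * w) = (2 : ℂ) • (a * (w * b)) := by
        rw [two_smul]
        congr 1
        · simp [hb, mul_assoc]
        · rw [hw]; simp [hb, mul_assoc]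
      rwa [e, smul_smul, inv_mul_cancel₀ two_ne_zero, one_smul] at this
    refine ⟨⟨rfl, by rw [hbs]⟩, ⟨h1, by rwa [hbs]⟩, fun w hw hwF => ?_⟩
    rw [hbs]
    exact ⟨h2 w hw hwF, h2 w hw hwF⟩
  have : cfcₙ g b ∈ S := cfcₙ_mem (𝕜 := ℝ) (𝕜' := ℂ) (s := S) (hs := hS) g hbS
  exact this.2.1.1

/-- Cutoff functions. -/
noncomputable def chebPhi (δ k t : ℝ) : ℝ := max 0 (min 1 (t / δ - k))

lemma chebPhi_cont (δ k : ℝ) : Continuous (chebPhi δ k) := by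
  unfold chebPhi; fun_prop

lemma chebPhi_zero {δ k t : ℝ} (hδ : 0 < δ) (h : t ≤ k * δ) : chebPhi δ k t = 0 := by
  unfold chebPhi
  have : t / δ ≤ k := by rwa [div_le_iff₀ hδ]
  exact max_eq_left ((min_le_right _ _).trans (by linarith))

lemma chebPhi_one {δ k t : ℝ} (hδ : 0 < δ) (h : (k + 1) * δ ≤ t) : chebPhi δ k t = 1 := by
  unfold chebPhi
  have : k + 1 ≤ t / δ := by rwa [le_div_iff₀ hδ]
  rw [min_eq_left (by linarith)]
  simp

lemma chebPhi_mem (δ k t : ℝ) : 0 ≤ chebPhi δ k t ∧ chebPhi δ k t ≤ 1 := by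
  unfold chebPhi
  exact ⟨le_max_left _ _, max_le zero_le_one (min_le_left _ _)⟩

/-- Cutoff inverse square roots. -/
noncomputable def chebG (δ k t : ℝ) : ℝ := chebPhi δ k t / √(max t δ)

lemma chebG_cont {δ : ℝ} (hδ : 0 < δ) (k : ℝ) : Continuous (chebG δ k) := by
  unfold chebG
  refine (chebPhi_cont δ k).div (by fun_prop) fun t => ?_
  exact (Real.sqrt_pos.mpr (hδ.trans_le (le_max_right _ _))).ne'

lemma chebG_sq {δ : ℝ} (hδ : 0 < δ) (k : ℝ) (hk : 1 ≤ k) (t : ℝ) :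
    t * (chebG δ k t * chebG δ k t) = chebPhi δ k t ^ 2 := by
  by_cases h : t ≤ k * δ
  · simp [chebG, chebPhi_zero hδ h]
  · have h1 : δ ≤ t := by nlinarith
    have h2 : 0 < t := hδ.trans_le h1
    unfold chebG
    rw [max_eq_left h1, div_mul_div_comm, Real.mul_self_sqrt h2.le]
    field_simp

lemma cheb_inner
    (hFclosed : IsClosed (F : Set A))
    (hFtriple : ∀ x ∈ F, ∀ y ∈ F, ∀ z ∈ F,
      (2 : ℂ)⁻¹ • (x * star y * z + z * star y * x) ∈ F)
    (hCheb : ∀ x : A, ∃! v : A, v ∈ F ∧ ‖x - v‖ = Metric.infDist x (F : Set A))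
    (hBP : ∀ u ∈ F, ¬ ∃ y ∈ F, ∀ z ∈ F,
      z - u * star y * z - z * star y * u + u * star y * z * star y * u = 0)
    (a : A) (ha : a ∈ F) (x : A) : a * star x * a ∈ F := by
  let := CStarAlgebra.spectralOrder A
  have := CStarAlgebra.spectralOrderedRing A
  set b := star a * a with hb
  have hbsa : IsSelfAdjoint b := .star_mul_self a
  have hspec : ∀ t ∈ quasispectrum ℝ b, 0 ≤ t :=
    quasispectrum_nonneg_of_nonneg b (star_mul_self_nonneg a)
  have step : ∀ δ : ℝ, 0 < δ → ∃ u : A, ‖a - a * u‖ ^ 2 ≤ 4 * δ ∧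
      (a * u) * star x * (a * u) ∈ F := by
    intro δ hδ
    have c1 := chebG_cont hδ 1
    have c2 := chebG_cont hδ 2
    have c3 := chebPhi_cont δ 3
    have z1 : chebG δ 1 0 = 0 := by simp [chebG, chebPhi_zero hδ (k := 1) (t := 0) (by positivity)]
    have z2 : chebG δ 2 0 = 0 := by simp [chebG, chebPhi_zero hδ (k := 2) (t := 0) (by positivity)]
    have z3 : chebPhi δ 3 0 = 0 := chebPhi_zero hδ (by positivity)
    set u1 := cfcₙ (chebG δ 1) b with hu1
    set u2 := cfcₙ (chebG δ 2) b with hu2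
    set u3 := cfcₙ (chebPhi δ 3) b with hu3
    have s1 : star u1 = u1 := (cfcₙ_predicate (R := ℝ) (chebG δ 1) b : IsSelfAdjoint _)
    have s2 : star u2 = u2 := (cfcₙ_predicate (R := ℝ) (chebG δ 2) b : IsSelfAdjoint _)
    have s3 : star u3 = u3 := (cfcₙ_predicate (R := ℝ) (chebPhi δ 3) b : IsSelfAdjoint _)
    have hid : b = cfcₙ (fun t : ℝ => t) b := (cfcₙ_id' ℝ b hbsa).symm
    have m2 : b * (u2 * u2) = cfcₙ (fun t => t * (chebG δ 2 t * chebG δ 2 t)) b := by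
      rw [cfcₙ_mul (fun t : ℝ => t) _ b (by fun_prop) rfl (by fun_prop) (by simp [z2]),
        cfcₙ_mul _ _ b (by fun_prop) z2 (by fun_prop) z2, ← hid]
    have m1 : b * (u1 * u1) = cfcₙ (fun t => t * (chebG δ 1 t * chebG δ 1 t)) b := by
      rw [cfcₙ_mul (fun t : ℝ => t) _ b (by fun_prop) rfl (by fun_prop) (by simp [z1]),
        cfcₙ_mul _ _ b (by fun_prop) z1 (by fun_prop) z1, ← hid]
    have k1 : b * (u1 * u1) * u2 = u2 := by
      rw [m1, hu2, ← cfcₙ_mul _ _ b (by fun_prop) (by simp) (by fun_prop) z2]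
      congr 1
      funext t
      rw [chebG_sq hδ 1 le_rfl]
      by_cases h : t ≤ 2 * δ
      · simp [chebG, chebPhi_zero hδ h]
      · rw [chebPhi_one hδ (by linarith)]; simp
    have k2 : b * (u2 * u2) * u3 = u3 := by
      rw [m2, hu3, ← cfcₙ_mul _ _ b (by fun_prop) (by simp) (by fun_prop) z3]
      congr 1
      funext t
      rw [chebG_sq hδ 2 (by norm_num)]
      by_cases h : t ≤ 3 * δ
      · simp [chebPhi_zero hδ h]
      · rw [chebPhi_one hδ (by linarith)]; simp
    have C12 : u1 * u2 = u2 * u1 := cfcₙ_commute_cfcₙ _ _ b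
    have C23 : u2 * u3 = u3 * u2 := cfcₙ_commute_cfcₙ _ _ b
    have Cb : ∀ g : ℝ → ℝ, b * cfcₙ g b = cfcₙ g b * b := by
      intro g
      have : cfcₙ (fun t : ℝ => t) b * cfcₙ g b = cfcₙ g b * cfcₙ (fun t : ℝ => t) b :=
        cfcₙ_commute_cfcₙ _ _ b
      rwa [← hid] at this
    have Cb1 : b * u1 = u1 * b := Cb _
    have Cb2 : b * u2 = u2 * b := Cb _
    have Cb3 : b * u3 = u3 * b := Cb _
    have k1' : u1 * (u1 * (b * u2)) = u2 := by
      rw [← mul_assoc u1 b, ← Cb1, mul_assoc, ← mul_assoc u1 b, ← Cb1]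
      simpa [mul_assoc] using k1
    have k2' : u2 * (u2 * (b * u3)) = u3 := by
      rw [← mul_assoc u2 b, ← Cb2, mul_assoc, ← mul_assoc u2 b, ← Cb2]
      simpa [mul_assoc] using k2
    have k1'' : u2 * (u1 * (b * u1)) = u2 := by
      rw [Cb1, ← mul_assoc u1, ← mul_assoc u2, ← mul_assoc u2, ← C12, mul_assoc u1 u2, ← C12]
      rw [mul_assoc, mul_assoc, ← Cb2]
      exact k1'
    have k2'' : u3 * (u2 * (b * u2)) = u3 := by
      rw [Cb2, ← mul_assoc u2, ← mul_assoc u3, ← mul_assoc u3, ← C23, mul_assoc u2 u3, ← C23]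
      rw [mul_assoc, mul_assoc, ← Cb3]
      exact k2'
    refine ⟨u3, ?_, ?_⟩
    · have e : star (a - a * u3) * (a - a * u3) =
          cfcₙ (fun t => t - t * chebPhi δ 3 t - (t * chebPhi δ 3 t
            - t * (chebPhi δ 3 t * chebPhi δ 3 t))) b := by
        rw [cfcₙ_sub (fun t => t - t * chebPhi δ 3 t) _ b (by fun_prop) (by simp)
            (by fun_prop) (by simp),
          cfcₙ_sub (fun t => t) _ b (by fun_prop) rfl (by fun_prop) (by simp),
          cfcₙ_sub (fun t => t * chebPhi δ 3 t) _ b (by fun_prop) (by simp)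
            (by fun_prop) (by simp),
          cfcₙ_mul (fun t : ℝ => t) _ b (by fun_prop) rfl (by fun_prop) z3,
          cfcₙ_mul (fun t : ℝ => t) _ b (by fun_prop) rfl (by fun_prop) (by simp [z3]),
          cfcₙ_mul _ _ b (by fun_prop) z3 (by fun_prop) z3, ← hid, ← hu3]
        rw [star_sub, star_mul, s3, sub_mul, mul_sub, mul_sub, ← mul_assoc (star a), ← hb]
        have q1 : u3 * star a * a = b * u3 := by rw [mul_assoc, ← hb, Cb3]
        have q2 : u3 * star a * (a * u3) = b * (u3 * u3) := by
          rw [← mul_assoc, q1, mul_assoc]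
        rw [q1, q2]
      rw [sq, ← CStarRing.norm_star_mul_self, e]
      apply norm_cfcₙ_le
      intro t ht
      have ht0 := hspec t ht
      have hp := chebPhi_mem δ 3 t
      have e2 : t - t * chebPhi δ 3 t - (t * chebPhi δ 3 t
            - t * (chebPhi δ 3 t * chebPhi δ 3 t)) = t * (1 - chebPhi δ 3 t) ^ 2 := by ring
      rw [e2, Real.norm_of_nonneg (by positivity)]
      by_cases h : t ≤ 4 * δ
      · have : (1 - chebPhi δ 3 t) ^ 2 ≤ 1 := by nlinarith
        nlinarith
      · rw [chebPhi_one hδ (by linarith)]; simp; positivity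
    · have ab : ∀ t : A, star a * (a * t) = b * t := fun t => by rw [← mul_assoc]
      apply cheb_mem F hFtriple hCheb hBP (a * u1) (a * u2)
        _ (cheb_cfc_mem F hFclosed hFtriple a ha _) (cheb_cfc_mem F hFclosed hFtriple a ha _)
      · simp only [star_mul, s1, mul_assoc, ab, k1']
      · simp only [star_mul, s1, mul_assoc, ab, k1'']
      · have h1 : ‖star (a * u2) * (a * u2)‖ ≤ 1 := by
          have : star (a * u2) * (a * u2) = b * (u2 * u2) := by
            simp only [star_mul, s2, mul_assoc, ab]
            rw [← mul_assoc, ← Cb2, mul_assoc]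
          rw [this, m2]
          apply norm_cfcₙ_le
          intro t _
          have hp := chebPhi_mem δ 2 t
          rw [chebG_sq hδ 2 (by norm_num), Real.norm_of_nonneg (by positivity)]
          nlinarith
        rw [CStarRing.norm_star_mul_self] at h1
        nlinarith [norm_nonneg (a * u2)]
      · simp only [star_mul, s2, mul_assoc, ab]
        have : ∀ t, u2 * (u2 * (b * (u3 * t))) = u3 * t := fun t => by
          conv_rhs => rw [← k2']
          simp only [mul_assoc]
        rw [this]
      · simp only [star_mul, s2, mul_assoc, ab, k2'']
  choose u hu1 hu2 using step
  let w : ℕ → A := fun n => a * u (1 / ((n : ℝ) + 1)) (by positivity)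
  have hw : Filter.Tendsto w Filter.atTop (nhds a) := by
    rw [tendsto_iff_norm_sub_tendsto_zero]
    have h0 : Filter.Tendsto (fun n : ℕ => √(4 * (1 / ((n : ℝ) + 1)))) Filter.atTop (nhds 0) := by
      have := (tendsto_one_div_add_atTop_nhds_zero_nat (𝕜 := ℝ)).const_mul 4
      simpa using this.sqrt
    refine squeeze_zero (fun _ => norm_nonneg _) (fun n => ?_) h0
    apply Real.le_sqrt_of_sq_le
    rw [norm_sub_rev]
    exact hu1 _ _
  have hlim : Filter.Tendsto (fun n => w n * star x * w n) Filter.atTop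
      (nhds (a * star x * a)) := (hw.mul_const _).mul hw
  exact hFclosed.mem_of_tendsto hlim (Filter.Eventually.of_forall fun n => hu2 _ _)

end Helpers

/-- Let `A` be a C*-algebra and `F` a JB*-subtriple of `A` which is a
Chebyshev subspace of `A`. If no element of `F` is Brown–Pedersen quasi-invertible
in `F`, then `F` is an inner ideal of `A`:
`a x* b + b x* a ∈ F` for all `a, b ∈ F` and all `x ∈ A`. -/
theorem cebysev_subtriple_without_BP_is_inner_ideal
    {A : Type*} [NonUnitalNormedRing A] [StarRing A] [CStarRing A]
    [NormedSpace ℂ A] [IsScalarTower ℂ A A] [SMulCommClass ℂ A A]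
    [StarModule ℂ A] [CompleteSpace A]
    (F : Submodule ℂ A) (hFclosed : IsClosed (F : Set A))
    (hFtriple : ∀ x ∈ F, ∀ y ∈ F, ∀ z ∈ F,
      (2 : ℂ)⁻¹ • (x * star y * z + z * star y * x) ∈ F)
    (hCheb : ∀ x : A, ∃! v : A, v ∈ F ∧ ‖x - v‖ = Metric.infDist x (F : Set A))
    (hBP : ∀ u ∈ F, ¬ ∃ y ∈ F, ∀ z ∈ F,
      z - u * star y * z - z * star y * u + u * star y * z * star y * u = 0) :
    ∀ a ∈ F, ∀ b ∈ F, ∀ x : A, a * star x * b + b * star x * a ∈ F := by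
  let : NonUnitalCStarAlgebra A := {}
  intro a ha b hb x
  have key := cheb_inner F hFclosed hFtriple hCheb hBP
  have h := F.sub_mem (F.sub_mem (key (a + b) (F.add_mem ha hb) x) (key a ha x)) (key b hb x)
  have e : (a + b) * star x * (a + b) - a * star x * a - b * star x * b
      = a * star x * b + b * star x * a := by
    simp only [add_mul, mul_add]; abel
  rwa [e] at h
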